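/- Let γ ∈ (0,1) be real, set α = 1 − γ, and define S_{γ,m}^× := 1/(2 Σ_{k=0}^m C(α,k)) for m ≥ 0. Then for every integer m ≥ 1 one has S_{γ,m+1}^× − S_{γ,m}^× ≤ S_{γ,2}^× − S_{γ,1}^×; that is, the increment of the finite-step stability bound is maximal at m = 1. -/

import Mathlib

/-- The generalized binomial coefficient `C(α,k) = α(α−1)⋯(α−k+1)/k!`. -/
noncomputable def genBinom (α : ℝ) (k : ℕ) : ℝ :=
  (∏ i ∈ Finset.range k, (α - i)) / (Nat.factorial k)

/-- The paper's `m`-step stability bound `S_{γ,m}^× = 1/(2 ∑_{k=0}^m C(1−γ,k))`. -/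
noncomputable def Sbound (γ : ℝ) (m : ℕ) : ℝ :=
  1 / (2 * ∑ k ∈ Finset.range (m + 1), genBinom (1 - γ) k)


lemma gb_succ (a : ℝ) (k : ℕ) : genBinom a (k+1) = genBinom a k * ((a - k) / (k+1)) := by
  unfold genBinom
  rw [Finset.prod_range_succ, Nat.factorial_succ]
  have : (Nat.factorial k : ℝ) ≠ 0 := by positivity
  push_cast
  field_simp

lemma gb_fac (a : ℝ) (ha0 : 0 < a) (ha1 : a < 1) (k : ℕ) (hk : 1 ≤ k) :
    ∃ p : ℝ, 0 ≤ p ∧ p ≤ 1 ∧ genBinom a (k+1) = - genBinom a k * p := by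
  have hk' : (1:ℝ) ≤ k := by exact_mod_cast hk
  refine ⟨(k - a) / (k+1), div_nonneg (by linarith) (by linarith), ?_, ?_⟩
  · rw [div_le_one (by linarith)]; linarith
  · rw [gb_succ]; ring

lemma gb_step (a : ℝ) (ha0 : 0 < a) (ha1 : a < 1) (n : ℕ) (hn : 1 ≤ n) (h : genBinom a n ≤ 0) :
    0 ≤ genBinom a (n+1) ∧ genBinom a (n+1) ≤ - genBinom a n ∧ genBinom a (n+2) ≤ 0 ∧
      0 ≤ genBinom a (n+1) + genBinom a (n+2) := by
  obtain ⟨p, hp0, hp1, hp⟩ := gb_fac a ha0 ha1 n hn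
  obtain ⟨q, hq0, hq1, hq⟩ := gb_fac a ha0 ha1 (n+1) (by omega)
  have h1 : 0 ≤ genBinom a (n+1) := by rw [hp]; exact mul_nonneg (by linarith) hp0
  refine ⟨h1, ?_, ?_, ?_⟩
  · rw [hp]; nlinarith
  · rw [show n + 2 = n + 1 + 1 from rfl, hq]; nlinarith
  · rw [show n + 2 = n + 1 + 1 from rfl, hq]; nlinarith

lemma gb_inv (a : ℝ) (ha0 : 0 < a) (ha1 : a < 1) (j : ℕ) :
    genBinom a (2*j+2) ≤ 0 ∧ genBinom a 2 / 2 ≤ genBinom a (2*j+4) ∧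
    ∑ k ∈ Finset.range 3, genBinom a k ≤ ∑ k ∈ Finset.range (2*j+3), genBinom a k := by
  have e2 : genBinom a 2 = a * (a - 1) / 2 := by
    simp [genBinom, Finset.prod_range_succ]
  have e4 : genBinom a 4 = genBinom a 2 * ((2 - a) * (3 - a) / 12) := by
    rw [gb_succ, gb_succ]; push_cast; ring
  have h2 : genBinom a 2 ≤ 0 := by rw [e2]; nlinarith
  induction j with
  | zero =>
    refine ⟨h2, ?_, le_rfl⟩
    show _ ≤ genBinom a 4
    rw [e4]
    have : (2 - a) * (3 - a) / 12 ≤ 1/2 := by nlinarith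
    nlinarith
  | succ j ih =>
    obtain ⟨i1, i2, i3⟩ := ih
    obtain ⟨s1, s2, s3, s4⟩ := gb_step a ha0 ha1 _ (by omega) i1
    obtain ⟨t1, t2, t3, t4⟩ := gb_step a ha0 ha1 _ (by omega) s3
    refine ⟨s3, ?_, ?_⟩
    · show _ ≤ genBinom a (2*j+2+2+2)
      have : genBinom a (2*j+4) = genBinom a (2*j+2+2) := rfl
      linarith
    · show _ ≤ ∑ k ∈ Finset.range (2*j+2+1+1+1), genBinom a k
      rw [Finset.sum_range_succ _ (2*j+2+1+1), Finset.sum_range_succ _ (2*j+2+1)]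
      have : ∑ k ∈ Finset.range (2*j+2+1), genBinom a k = ∑ k ∈ Finset.range (2*j+3), genBinom a k := rfl
      have : genBinom a (2*j+2+1+1) = genBinom a (2*j+2+2) := rfl
      linarith

theorem stmt_9 (γ : ℝ) (h0 : 0 < γ) (h1 : γ < 1) :
    ∀ m : ℕ, 1 ≤ m →
      Sbound γ (m + 1) - Sbound γ m ≤ Sbound γ 2 - Sbound γ 1 := by
  intro m hm
  unfold Sbound
  obtain ⟨a, ha⟩ : ∃ a, a = 1 - γ := ⟨_, rfl⟩
  rw [← ha]
  have ha0 : 0 < a := by linarith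
  have ha1 : a < 1 := by linarith
  have e2 : genBinom a 2 = a * (a - 1) / 2 := by
    simp [genBinom, Finset.prod_range_succ]
  have T1 : ∑ k ∈ Finset.range (1+1), genBinom a k = 1 + a := by
    simp [genBinom, Finset.sum_range_succ]
  have T2 : ∑ k ∈ Finset.range (2+1), genBinom a k = 1 + a + genBinom a 2 := by
    rw [Finset.sum_range_succ, T1]
  have key : ∀ x c : ℝ, 0 < x → 0 < x + c →
      1 / (2 * (x + c)) - 1 / (2 * x) = (-c) / (2 * (x * (x + c))) := by
    intro x c hx hc
    field_simp
    ring
  have hc2 : genBinom a 2 ≤ 0 := by rw [e2]; nlinarith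
  have hT2 : 0 < 1 + a + genBinom a 2 := by rw [e2]; nlinarith
  rw [T1, T2, key _ _ (by linarith) hT2, Finset.sum_range_succ _ (m+1)]
  rcases Nat.even_or_odd' m with ⟨j, rfl | rfl⟩
  · obtain ⟨i, rfl⟩ : ∃ i, j = i + 1 := ⟨j - 1, by omega⟩
    obtain ⟨i1, i2, i3⟩ := gb_inv a ha0 ha1 i
    obtain ⟨s1, -⟩ := gb_step a ha0 ha1 _ (by omega) i1
    change _ ≤ ∑ k ∈ Finset.range (2*(i+1)+1), genBinom a k at i3
    change 0 ≤ genBinom a (2*(i+1)+1) at s1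
    rw [T2] at i3
    rw [key _ _ (by linarith) (by linarith)]
    refine le_trans (b := 0) ?_ ?_
    · apply div_nonpos_of_nonpos_of_nonneg (by linarith)
      have := mul_pos (lt_of_lt_of_le hT2 i3) (lt_of_lt_of_le hT2 (i3.trans (le_add_of_nonneg_right s1)))
      linarith
    · apply div_nonneg (by linarith)
      have := mul_pos (show 0 < 1 + a by linarith) hT2
      linarith
  · rcases Nat.eq_zero_or_pos j with rfl | hj
    · simp only [Nat.mul_zero, Nat.zero_add]
      rw [T1, key _ _ (by linarith) hT2]
    · obtain ⟨i, rfl⟩ : ∃ i, j = i + 1 := ⟨j - 1, by omega⟩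
      obtain ⟨i1, i2, i3⟩ := gb_inv a ha0 ha1 i
      obtain ⟨k1, -, k3⟩ := gb_inv a ha0 ha1 (i+1)
      obtain ⟨s1, -⟩ := gb_step a ha0 ha1 _ (by omega) i1
      change _ ≤ ∑ k ∈ Finset.range (2*(i+1)+1+1+1), genBinom a k at k3
      change _ ≤ genBinom a (2*(i+1)+1+1) at i2
      change genBinom a (2*(i+1)+1+1) ≤ 0 at k1
      rw [T2, Finset.sum_range_succ] at k3
      generalize ∑ k ∈ Finset.range (2*(i+1)+1+1), genBinom a k = x at *
      generalize genBinom a (2*(i+1)+1+1) = c at *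
      generalize hd : genBinom a 2 = d at *
      have hx : 1 + a + d ≤ x := by linarith
      rw [key _ _ (by linarith) (by linarith)]
      have hP : (1 + a + d) * (1 + a + d) ≤ x * (x + c) :=
        mul_le_mul hx k3 hT2.le (by linarith)
      have hQ : (1 + a) ≤ 2 * (1 + a + d) := by rw [e2]; nlinarith
      have hQ2 : (1 + a) * (1 + a + d) ≤ 2 * (x * (x + c)) := by nlinarith
      have hR : 0 < (1 + a) * (1 + a + d) := mul_pos (by linarith) hT2
      rw [div_le_div_iff₀ (by linarith) (by linarith)]
      have A := mul_le_mul_of_nonneg_left hQ2 (show 0 ≤ -d by linarith)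
      have B := mul_le_mul_of_nonneg_right (show -c ≤ -d/2 by linarith) hR.le
      nlinarith
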